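/- For all natural numbers a and b, (6!)^a · (4!)^b = (5!)^a · (3!)^{a+b} · (2!)^{2b}; moreover, if a and b are not both zero, then the multiset with the part 6 taken a times, 4 taken b times, and 1 taken 2a+3b times, and the multiset with the part 5 taken a times, 3 taken a+b times, and 2 taken 2b times, are distinct partitions of n = 8a + 7b with no parts in common, and hence form an irreducible pair of partitions of 8a + 7b. -/

import Mathlib

/-- The product, with multiplicity, of the factorials of the elements of a multiset. -/
def factorialProd (A : Multiset ℕ) : ℕ := (A.map Nat.factorial).prod

/-- Two partitions of `n` form an irreducible pair if they are distinct, have no parts in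
common, and yield the same multinomial coefficient (equal products of factorials of parts). -/
def IsIrredPair {n : ℕ} (a b : Nat.Partition n) : Prop :=
  a ≠ b ∧ (∀ j : ℕ, ¬(j ∈ a.parts ∧ j ∈ b.parts)) ∧
    factorialProd a.parts = factorialProd b.parts

/-! The identities `6! = 5! · 3!` and `4! = 3! · 2!²`, padded with parts equal to `1`, give the
irreducible pairs `{6, 1, 1}`, `{5, 3}` of partitions of `8` and `{4, 1, 1, 1}`, `{3, 2, 2}` of
partitions of `7`. Every left part lies in `{6, 4, 1}` and every right part in `{5, 3, 2}`, so
taking `a` copies of the first pair together with `b` copies of the second creates no common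
part. -/

theorem factorialProd_add (s t : Multiset ℕ) :
    factorialProd (s + t) = factorialProd s * factorialProd t := by
  simp only [factorialProd, Multiset.map_add, Multiset.prod_add]

theorem factorialProd_replicate (k j : ℕ) :
    factorialProd (Multiset.replicate k j) = Nat.factorial j ^ k := by
  simp only [factorialProd, Multiset.map_replicate, Multiset.prod_replicate]

theorem exists_isIrredPair_of_disjoint {n : ℕ} {s t : Multiset ℕ}
    (hs_pos : ∀ j ∈ s, 0 < j) (ht_pos : ∀ j ∈ t, 0 < j) (hs_sum : s.sum = n) (ht_sum : t.sum = n)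
    (hne : s ≠ t) (hdisj : Disjoint s t) (hprod : factorialProd s = factorialProd t) :
    ∃ P Q : Nat.Partition n, P.parts = s ∧ Q.parts = t ∧ IsIrredPair P Q :=
  ⟨⟨s, hs_pos _, hs_sum⟩, ⟨t, ht_pos _, ht_sum⟩, rfl, rfl,
    fun h ↦ hne (congrArg Nat.Partition.parts h),
    fun _ ⟨hjs, hjt⟩ ↦ Multiset.disjoint_left.1 hdisj hjs hjt, hprod⟩

theorem factorial_six_pow_mul_factorial_four_pow (a b : ℕ) :
    Nat.factorial 6 ^ a * Nat.factorial 4 ^ b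
      = Nat.factorial 5 ^ a * Nat.factorial 3 ^ (a + b) * Nat.factorial 2 ^ (2 * b) := by
  have six_factorial : Nat.factorial 6 = Nat.factorial 5 * Nat.factorial 3 := by decide
  have four_factorial : Nat.factorial 4 = Nat.factorial 3 * Nat.factorial 2 ^ 2 := by decide
  rw [six_factorial, four_factorial, mul_pow, mul_pow, pow_add, pow_mul]
  ac_rfl

/-- The left member of the family of irreducible pairs: `a` copies of `{6, 1, 1}` together with
`b` copies of `{4, 1, 1, 1}`, with equal parts collected. -/
def partsSixFourOne (a b : ℕ) : Multiset ℕ :=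
  Multiset.replicate a 6 + Multiset.replicate b 4 + Multiset.replicate (2 * a + 3 * b) 1

/-- The right member of the family of irreducible pairs: `a` copies of `{5, 3}` together with
`b` copies of `{3, 2, 2}`, with equal parts collected. -/
def partsFiveThreeTwo (a b : ℕ) : Multiset ℕ :=
  Multiset.replicate a 5 + Multiset.replicate (a + b) 3 + Multiset.replicate (2 * b) 2

section Family

variable {a b j : ℕ}

theorem eq_of_mem_partsSixFourOne (hj : j ∈ partsSixFourOne a b) : j = 6 ∨ j = 4 ∨ j = 1 := by
  simp only [partsSixFourOne, Multiset.mem_add, Multiset.mem_replicate] at hj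
  tauto

theorem eq_of_mem_partsFiveThreeTwo (hj : j ∈ partsFiveThreeTwo a b) :
    j = 5 ∨ j = 3 ∨ j = 2 := by
  simp only [partsFiveThreeTwo, Multiset.mem_add, Multiset.mem_replicate] at hj
  tauto

theorem pos_of_mem_partsSixFourOne (hj : j ∈ partsSixFourOne a b) : 0 < j := by
  have := eq_of_mem_partsSixFourOne hj
  omega

theorem pos_of_mem_partsFiveThreeTwo (hj : j ∈ partsFiveThreeTwo a b) : 0 < j := by
  have := eq_of_mem_partsFiveThreeTwo hj
  omega

variable (a b)

theorem sum_partsSixFourOne : (partsSixFourOne a b).sum = 8 * a + 7 * b := by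
  simp only [partsSixFourOne, Multiset.sum_add, Multiset.sum_replicate, smul_eq_mul]
  ring

theorem sum_partsFiveThreeTwo : (partsFiveThreeTwo a b).sum = 8 * a + 7 * b := by
  simp only [partsFiveThreeTwo, Multiset.sum_add, Multiset.sum_replicate, smul_eq_mul]
  ring

theorem factorialProd_partsSixFourOne :
    factorialProd (partsSixFourOne a b) = Nat.factorial 6 ^ a * Nat.factorial 4 ^ b := by
  simp only [partsSixFourOne, factorialProd_add, factorialProd_replicate, Nat.factorial_one,
    one_pow, mul_one]

theorem factorialProd_partsFiveThreeTwo :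
    factorialProd (partsFiveThreeTwo a b)
      = Nat.factorial 5 ^ a * Nat.factorial 3 ^ (a + b) * Nat.factorial 2 ^ (2 * b) := by
  simp only [partsFiveThreeTwo, factorialProd_add, factorialProd_replicate]

theorem factorialProd_partsSixFourOne_eq_partsFiveThreeTwo :
    factorialProd (partsSixFourOne a b) = factorialProd (partsFiveThreeTwo a b) := by
  rw [factorialProd_partsSixFourOne, factorialProd_partsFiveThreeTwo,
    factorial_six_pow_mul_factorial_four_pow]

theorem disjoint_partsSixFourOne_partsFiveThreeTwo :
    Disjoint (partsSixFourOne a b) (partsFiveThreeTwo a b) := by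
  refine Multiset.disjoint_left.2 fun {j} hj_left hj_right ↦ ?_
  have := eq_of_mem_partsSixFourOne hj_left
  have := eq_of_mem_partsFiveThreeTwo hj_right
  omega

variable {a b}

theorem partsSixFourOne_ne_zero (hab : ¬(a = 0 ∧ b = 0)) : partsSixFourOne a b ≠ 0 := by
  intro hzero
  have hsum := sum_partsSixFourOne a b
  rw [hzero, Multiset.sum_zero] at hsum
  omega

end Family

/-- `(6!)^a · (4!)^b = (5!)^a · (3!)^{a+b} · (2!)^{2b}`; moreover, if `a` and `b` are not both
zero, the multiset with part `6` taken `a` times, `4` taken `b` times and `1` taken `2a+3b`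
times, and the multiset with part `5` taken `a` times, `3` taken `a+b` times and `2` taken
`2b` times, are distinct partitions of `8a + 7b` with no parts in common, hence form an
irreducible pair of partitions of `8a + 7b`. -/
theorem irreducible_pair_family (a b : ℕ) :
    Nat.factorial 6 ^ a * Nat.factorial 4 ^ b
      = Nat.factorial 5 ^ a * Nat.factorial 3 ^ (a + b) * Nat.factorial 2 ^ (2 * b) ∧
    (¬(a = 0 ∧ b = 0) →
      ∀ lam mu : Multiset ℕ,
        lam = Multiset.replicate a 6 + Multiset.replicate b 4
                + Multiset.replicate (2 * a + 3 * b) 1 →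
        mu = Multiset.replicate a 5 + Multiset.replicate (a + b) 3
                + Multiset.replicate (2 * b) 2 →
        lam ≠ mu ∧ lam.sum = 8 * a + 7 * b ∧ mu.sum = 8 * a + 7 * b ∧
        (∀ j : ℕ, ¬(j ∈ lam ∧ j ∈ mu)) ∧ factorialProd lam = factorialProd mu ∧
        ∃ P Q : Nat.Partition (8 * a + 7 * b),
          P.parts = lam ∧ Q.parts = mu ∧ IsIrredPair P Q) := by
  refine ⟨factorial_six_pow_mul_factorial_four_pow a b, fun hab lam mu hlam hmu ↦ ?_⟩
  obtain rfl : lam = partsSixFourOne a b := hlam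
  obtain rfl : mu = partsFiveThreeTwo a b := hmu
  have hdisj := disjoint_partsSixFourOne_partsFiveThreeTwo a b
  have hne : partsSixFourOne a b ≠ partsFiveThreeTwo a b :=
    hdisj.ne (partsSixFourOne_ne_zero hab)
  have hprod := factorialProd_partsSixFourOne_eq_partsFiveThreeTwo a b
  have hsum_left := sum_partsSixFourOne a b
  have hsum_right := sum_partsFiveThreeTwo a b
  exact ⟨hne, hsum_left, hsum_right,
    fun _ ⟨hj_left, hj_right⟩ ↦ Multiset.disjoint_left.1 hdisj hj_left hj_right, hprod,
    exists_isIrredPair_of_disjoint (fun _ ↦ pos_of_mem_partsSixFourOne)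
      (fun _ ↦ pos_of_mem_partsFiveThreeTwo) hsum_left hsum_right hne hdisj hprod⟩
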